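/- The interval [0, d c⃗] in 𝕃 is finite, and its cardinality equals Σ_{I ⊆ {1,…,n}, |I| ≤ d} (d + 1 − |I|) · Π_{i ∈ I} (p_i − 1). -/

import Mathlib

/-- The subgroup of relations `p i • x⃗_i − c⃗` inside the free abelian group
`(Fin n → ℤ) × ℤ` on the generators `x⃗_1, …, x⃗_n, c⃗`. -/
def GLrels (n : ℕ) (p : Fin n → ℕ) : AddSubgroup ((Fin n → ℤ) × ℤ) :=
  AddSubgroup.closure (Set.range fun i : Fin n => ((Pi.single i (p i : ℤ), -1) : (Fin n → ℤ) × ℤ))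

/-- The grading group `𝕃 = ⟨x⃗_1, …, x⃗_n, c⃗⟩ / ⟨p_i x⃗_i − c⃗⟩`. -/
abbrev GLgroup (n : ℕ) (p : Fin n → ℕ) : Type :=
  ((Fin n → ℤ) × ℤ) ⧸ GLrels n p

/-- The generator `x⃗_i` of `𝕃`. -/
def GLx (n : ℕ) (p : Fin n → ℕ) (i : Fin n) : GLgroup n p :=
  QuotientAddGroup.mk (Pi.single i 1, 0)

/-- The generator `c⃗` of `𝕃`. -/
def GLc (n : ℕ) (p : Fin n → ℕ) : GLgroup n p :=
  QuotientAddGroup.mk (0, 1)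

/-- The positive cone `𝕃_+`: the submonoid of `𝕃` generated by `x⃗_1, …, x⃗_n` and `c⃗`. -/
def GLplus (n : ℕ) (p : Fin n → ℕ) : AddSubmonoid (GLgroup n p) :=
  AddSubmonoid.closure ({GLc n p} ∪ Set.range (GLx n p))

/-- The partial order relation on `𝕃`: `x⃗ ≤ y⃗` iff `y⃗ − x⃗ ∈ 𝕃_+`. -/
def GLle (n : ℕ) (p : Fin n → ℕ) (x y : GLgroup n p) : Prop :=
  y - x ∈ GLplus n p

/-!
Reducing the coefficients of the `x⃗_i` modulo `p_i` writes every `z ∈ 𝕃` uniquely as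
`∑ i, r_i x⃗_i + ℓ c⃗` with `0 ≤ r_i < p_i` and `ℓ ∈ ℤ`, and `0 ≤ z` exactly when `0 ≤ ℓ`. Negating
replaces each nonzero `r_i` by `p_i - r_i` at the cost of one `c⃗`, so `z ≤ d c⃗` exactly when
`ℓ + #{i | r_i ≠ 0} ≤ d`. A residue vector with support `I` therefore admits `d + 1 - |I|` values
of `ℓ` (none if `|I| > d`), and there are `∏ i ∈ I, (p_i - 1)` such vectors.
-/

section Support

variable {ι : Type*} [Fintype ι] [DecidableEq ι] {α : ι → Type*} [∀ i, Fintype (α i)]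
  [∀ i, DecidableEq (α i)] [∀ i, Zero (α i)]

theorem card_filter_support_eq (I : Finset ι) :
    Finset.card {r : ∀ i, α i | ({i | r i ≠ 0} : Finset ι) = I} =
      ∏ i ∈ I, (Fintype.card (α i) - 1) := by
  have h_pi : ({r : ∀ i, α i | ({i | r i ≠ 0} : Finset ι) = I} : Finset (∀ i, α i)) =
      Fintype.piFinset fun i => if i ∈ I then {0}ᶜ else {0} := by
    ext r
    simp only [Finset.mem_filter_univ, Finset.ext_iff, Fintype.mem_piFinset]
    refine forall_congr' fun i => ?_
    by_cases hi : i ∈ I <;> simp [hi]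
  rw [h_pi, Fintype.card_piFinset]
  simp only [apply_ite Finset.card, Finset.card_compl, Finset.card_singleton,
    Finset.prod_ite_mem, Finset.univ_inter]

theorem sum_comp_hammingNorm {M : Type*} [AddCommMonoid M] (f : ℕ → M) :
    ∑ r : ∀ i, α i, f (hammingNorm r) =
      ∑ I : Finset ι, (∏ i ∈ I, (Fintype.card (α i) - 1)) • f I.card := by
  rw [← Finset.sum_fiberwise _ fun r : ∀ i, α i => ({i | r i ≠ 0} : Finset ι)]
  refine Finset.sum_congr rfl fun I _ => ?_
  rw [← card_filter_support_eq I, ← Finset.sum_const]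
  refine Finset.sum_congr rfl fun r hr => ?_
  rw [hammingNorm, (Finset.mem_filter.1 hr).2]

end Support

namespace GLgroup

variable {n : ℕ} {p : Fin n → ℕ}

theorem mem_GLrels_iff {w : (Fin n → ℤ) × ℤ} :
    w ∈ GLrels n p ↔ ∃ k : Fin n → ℤ, w = (fun i => p i * k i, -∑ i, k i) := by
  rw [GLrels, AddSubgroup.mem_closure_range_iff_of_fintype]
  refine exists_congr fun k => ?_
  have h_sum : ∑ i, k i • ((Pi.single i (p i : ℤ), -1) : (Fin n → ℤ) × ℤ) =
      (fun i => p i * k i, -∑ i, k i) := by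
    ext j
    · simp [Prod.fst_sum, Pi.single_apply, mul_comm]
    · simp [Prod.snd_sum]
  rw [h_sum, eq_comm]

theorem mk_eq_mk_iff {v w : Fin n → ℤ} {a b : ℤ} :
    (QuotientAddGroup.mk (v, a) : GLgroup n p) = QuotientAddGroup.mk (w, b) ↔
      ∃ k : Fin n → ℤ, w = (fun i => v i + p i * k i) ∧ b = a - ∑ i, k i := by
  rw [QuotientAddGroup.eq, mem_GLrels_iff]
  refine exists_congr fun k => ?_
  simp only [Prod.neg_mk, Prod.mk_add_mk, Prod.mk.injEq, neg_add_eq_iff_eq_add, ← sub_eq_add_neg]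
  rfl

theorem mk_eq_sum (v : Fin n → ℤ) (a : ℤ) :
    (QuotientAddGroup.mk (v, a) : GLgroup n p) = ∑ i, v i • GLx n p i + a • GLc n p := by
  have h_free : (v, a) = ∑ i, v i • ((Pi.single i 1, 0) : (Fin n → ℤ) × ℤ) + a • (0, 1) := by
    ext j
    · simp [Prod.fst_sum, Pi.single_apply]
    · simp [Prod.snd_sum]
  rw [h_free, QuotientAddGroup.mk_add, QuotientAddGroup.mk_sum]
  rfl

/-- The residues `r_i` modulo `p_i` of the coefficients of the `x⃗_i`. -/
def residue : GLgroup n p → ∀ i, ZMod (p i) :=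
  Quotient.lift (fun w i => (w.1 i : ZMod (p i))) fun ⟨v, a⟩ ⟨w, b⟩ h => by
    obtain ⟨k, rfl, -⟩ := mk_eq_mk_iff.1 (Quotient.sound h)
    simp

@[simp]
theorem residue_mk (v : Fin n → ℤ) (a : ℤ) :
    residue (QuotientAddGroup.mk (v, a) : GLgroup n p) = fun i => (v i : ZMod (p i)) :=
  rfl

section NeZero

variable [∀ i, NeZero (p i)]

/-- The coefficient `ℓ` of `c⃗` in the normal form `∑ i, r_i x⃗_i + ℓ c⃗`, `0 ≤ r_i < p_i`.
On a representative it is computed by rounding each `v_i / p_i` down. -/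
def floor : GLgroup n p → ℤ :=
  Quotient.lift (fun w => w.2 + ∑ i, w.1 i / (p i : ℤ)) fun ⟨v, a⟩ ⟨w, b⟩ h => by
    obtain ⟨k, rfl, rfl⟩ := mk_eq_mk_iff.1 (Quotient.sound h)
    simp [Int.add_mul_ediv_left, NeZero.ne, Finset.sum_add_distrib]

@[simp]
theorem floor_mk (v : Fin n → ℤ) (a : ℤ) :
    floor (QuotientAddGroup.mk (v, a) : GLgroup n p) = a + ∑ i, v i / (p i : ℤ) :=
  rfl

theorem mk_residue_floor (z : GLgroup n p) :
    QuotientAddGroup.mk (fun i => ((residue z i).val : ℤ), floor z) = z := by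
  obtain ⟨⟨v, a⟩, rfl⟩ := QuotientAddGroup.mk_surjective z
  refine mk_eq_mk_iff.2 ⟨fun i => v i / (p i : ℤ), ?_, by simp⟩
  simp only [residue_mk, ZMod.val_intCast, Int.emod_add_mul_ediv]

/-- The normal form `∑ i, r_i x⃗_i + ℓ c⃗` of an element of `𝕃`, encoded as `(r, ℓ)` with `r_i` in
`ZMod (p i)`. -/
def normalForm : GLgroup n p ≃ (∀ i, ZMod (p i)) × ℤ where
  toFun z := (residue z, floor z)
  invFun x := QuotientAddGroup.mk (fun i => ((x.1 i).val : ℤ), x.2)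
  left_inv := mk_residue_floor
  right_inv x := by
    have h_div (i : Fin n) : ((x.1 i).val : ℤ) / (p i : ℤ) = 0 :=
      Int.ediv_eq_zero_of_lt (by positivity) (by exact_mod_cast (x.1 i).val_lt)
    ext
    · simp
    · simp [h_div, -ZMod.natCast_val]

theorem floor_add_floor_le (y z : GLgroup n p) : floor y + floor z ≤ floor (y + z) := by
  obtain ⟨⟨v, a⟩, rfl⟩ := QuotientAddGroup.mk_surjective y
  obtain ⟨⟨w, b⟩, rfl⟩ := QuotientAddGroup.mk_surjective z
  have h_sum : ∑ i, v i / (p i : ℤ) + ∑ i, w i / (p i : ℤ) ≤ ∑ i, (v i + w i) / (p i : ℤ) := by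
    rw [← Finset.sum_add_distrib]
    exact Finset.sum_le_sum fun i _ =>
      Int.ediv_add_ediv_le_add_ediv (by exact_mod_cast NeZero.pos (p i))
  rw [← QuotientAddGroup.mk_add, Prod.mk_add_mk]
  simp only [floor_mk, Pi.add_apply]
  linarith

theorem mem_GLplus_iff {z : GLgroup n p} : z ∈ GLplus n p ↔ 0 ≤ floor z := by
  constructor
  · intro hz
    induction hz using AddSubmonoid.closure_induction with
    | mem z hz =>
      obtain rfl | ⟨i, rfl⟩ := hz
      · simp [GLc]
      · have h_single : 0 ≤ Pi.single (M := fun _ => ℤ) i 1 := Pi.single_nonneg.2 zero_le_one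
        rw [GLx, floor_mk, zero_add]
        exact Finset.sum_nonneg fun j _ => Int.ediv_nonneg (h_single j) (by positivity)
    | zero => exact (by simp : 0 ≤ floor (QuotientAddGroup.mk (0, 0) : GLgroup n p))
    | add y z _ _ hy hz => exact (add_nonneg hy hz).trans (floor_add_floor_le y z)
  · intro hz
    rw [← mk_residue_floor z, mk_eq_sum]
    lift floor z to ℕ using hz with ℓ
    simp only [natCast_zsmul]
    exact add_mem
      (sum_mem fun i _ => nsmul_mem (AddSubmonoid.subset_closure (.inr ⟨i, rfl⟩)) _)
      (nsmul_mem (AddSubmonoid.subset_closure (.inl rfl)) _)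

theorem floor_zsmul_GLc_sub (m : ℤ) (z : GLgroup n p) :
    floor (m • GLc n p - z) = m - floor z - hammingNorm (residue z) := by
  obtain ⟨⟨v, a⟩, rfl⟩ := QuotientAddGroup.mk_surjective z
  have h_neg_div (i : Fin n) : -v i / (p i : ℤ) =
      -(v i / (p i : ℤ)) - if (v i : ZMod (p i)) ≠ 0 then 1 else 0 := by
    rw [Int.neg_ediv, Int.sign_eq_one_of_pos (by exact_mod_cast NeZero.pos (p i)), ite_not]
    simp only [ZMod.intCast_zmod_eq_zero_iff_dvd]
  have h_mk : m • GLc n p - QuotientAddGroup.mk (v, a) =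
      (QuotientAddGroup.mk (fun i => -v i, m - a) : GLgroup n p) := by
    rw [GLc, ← QuotientAddGroup.mk_zsmul, ← QuotientAddGroup.mk_sub]
    congr 1
    ext <;> simp
  rw [h_mk, residue_mk, floor_mk, floor_mk, hammingNorm, Finset.card_filter]
  simp only [h_neg_div, Finset.sum_sub_distrib, Finset.sum_neg_distrib, Nat.cast_sum, Nat.cast_ite,
    Nat.cast_one, Nat.cast_zero]
  ring

theorem mem_interval_iff {m : ℤ} {z : GLgroup n p} :
    GLle n p 0 z ∧ GLle n p z (m • GLc n p) ↔
      floor z ∈ Set.Icc 0 (m - hammingNorm (residue z)) := by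
  rw [GLle, GLle, sub_zero, mem_GLplus_iff, mem_GLplus_iff, floor_zsmul_GLc_sub, Set.mem_Icc]
  refine and_congr_right fun _ => ?_
  constructor <;> intro h <;> linarith

/-- The interval `[0, m c⃗]`, fibred over the residue vectors. -/
def intervalEquiv (m : ℤ) :
    {z : GLgroup n p | GLle n p 0 z ∧ GLle n p z (m • GLc n p)} ≃
      Σ r : ∀ i, ZMod (p i), Set.Icc 0 (m - hammingNorm r) :=
  (normalForm.subtypeEquiv fun _ => mem_interval_iff).trans
    (Equiv.subtypeProdEquivSigmaSubtype fun r ℓ => ℓ ∈ Set.Icc 0 (m - hammingNorm r))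

end NeZero

end GLgroup

/-- The interval `[0, d c⃗]` in `𝕃` is finite of cardinality
`Σ_{I ⊆ {1,…,n}, |I| ≤ d} (d + 1 − |I|) · Π_{i ∈ I} (p_i − 1)`. -/
theorem card_interval (d n : ℕ) (hd : 1 ≤ d) (p : Fin n → ℕ) (hp : ∀ i, 0 < p i) :
    {z : GLgroup n p | GLle n p 0 z ∧ GLle n p z ((d : ℤ) • GLc n p)}.Finite ∧
      {z : GLgroup n p | GLle n p 0 z ∧ GLle n p z ((d : ℤ) • GLc n p)}.ncard =
        ∑ I ∈ Finset.univ.powerset.filter (fun I : Finset (Fin n) => I.card ≤ d),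
          (d + 1 - I.card) * ∏ i ∈ I, (p i - 1) := by
  have : ∀ i, NeZero (p i) := fun i => ⟨(hp i).ne'⟩
  refine ⟨Set.finite_coe_iff.1 (Finite.of_equiv _ (GLgroup.intervalEquiv d).symm), ?_⟩
  have h_Icc (k : ℕ) : Nat.card (Set.Icc (0 : ℤ) (d - k)) = d + 1 - k := by
    rw [Nat.card_eq_fintype_card, Fintype.card_Icc, Int.card_Icc]
    omega
  calc
    _ = ∑ r : ∀ i, ZMod (p i), (d + 1 - hammingNorm r) := by
      rw [← Nat.card_coe_set_eq, Nat.card_congr (GLgroup.intervalEquiv d), Nat.card_sigma]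
      simp only [h_Icc]
    _ = ∑ I : Finset (Fin n), (d + 1 - I.card) * ∏ i ∈ I, (p i - 1) := by
      rw [sum_comp_hammingNorm fun k => d + 1 - k]
      simp only [ZMod.card, smul_eq_mul, mul_comm]
    _ = _ := by
      rw [Finset.powerset_univ, Finset.sum_filter_of_ne]
      intro I _ hI
      have := left_ne_zero_of_mul hI
      omega
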